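/- Let R be a commutative ring and let z_1, z_2, z_3 : ℤ → R be arbitrary functions. For m ≥ 1 and s ∈ ℤ define the one-row sum H_m(s) := Σ_{1 ≤ i_1 ≤ i_2 ≤ … ≤ i_m ≤ 3} ∏_{k=1}^m z_{i_k}(s + 2(k−1)), and set H_0(s) := 1 and H_m(s) := 0 for m < 0. Then for every skew Young diagram μ/λ with d rows and every s ∈ ℤ, the sum over all semistandard skew tableaux tab of shape μ/λ of the products ∏_{cells (j,c) of μ/λ} z_{tab(j,c)}(s + 2(c−1) − 2(j−1)) equals the determinant det_{1 ≤ j,k ≤ d} ( H_{μ_j − λ_k − j + k}( s + 2λ_k − 2(k−1) ) ). -/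

import Mathlib

open scoped Classical

noncomputable section

/-- The one-row sum `H_m(s)` for `m : ℕ`: sum over weakly increasing sequences
`i_1 ≤ … ≤ i_m` with entries in `{1,2,3}` (here modelled by `Fin 3`) of the products
`∏_{k=1}^m z_{i_k}(s + 2(k-1))`. -/
def oneRowSum {R : Type*} [CommRing R] (z : Fin 3 → ℤ → R) (m : ℕ) (s : ℤ) : R :=
  ∑ f ∈ Finset.univ.filter (fun f : Fin m → Fin 3 => Monotone f),
    ∏ k : Fin m, z (f k) (s + 2 * ((k : ℕ) : ℤ))

/-- `H_m(s)` for `m : ℤ`: the one-row sum for `m ≥ 0` (which is `1` for `m = 0`),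
and `0` for `m < 0`. -/
def Hrow {R : Type*} [CommRing R] (z : Fin 3 → ℤ → R) (m : ℤ) (s : ℤ) : R :=
  if 0 ≤ m then oneRowSum z m.toNat s else 0

/-!
The letter `0` occupies a horizontal strip in a semistandard tableau, and removing it leaves a
semistandard tableau in the remaining letters. So the tableau sum is obtained from the sum on one
letter fewer by summing over the horizontal strips `ν / lam`. Let `T` be the matrix of weights of
one-letter rows, indexed by contents. Its minor with rows `lam i - i` and columns `ν j - j` is the
weight of `ν / lam` if this is a horizontal strip and zero otherwise: `T` is triangular, and an
overlap of two rows makes two columns proportional. The matrix of row sums on `n + 1` letters is `T`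
times the one on `n` letters, so by Cauchy–Binet its minors obey the same recursion.
-/

section CauchyBinet

variable {R α : Type*} [CommRing R]

theorem det_sum_mul_eq_sum_piFinset {ι : Type*} [Fintype ι] [DecidableEq ι] (S : Finset α)
    (A : ι → α → R) (B : α → ι → R) :
    Matrix.det (Matrix.of fun i j => ∑ x ∈ S, A i x * B x j) =
      ∑ r ∈ Fintype.piFinset fun _ : ι => S,
        (∏ i, A i (r i)) * Matrix.det (Matrix.of fun i j => B (r i) j) := by
  have rows : (Matrix.of fun i j => ∑ x ∈ S, A i x * B x j) = fun i => ∑ x ∈ S, A i x • B x := by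
    ext i j
    simp [Finset.sum_apply]
  let D := (Matrix.detRowAlternating (n := ι) (R := R)).toMultilinearMap
  rw [rows]
  exact (D.map_sum_finset (fun i x => A i x • B x) fun _ => S).trans <|
    Finset.sum_congr rfl fun r _ => D.map_smul_univ (fun i => A i (r i)) fun i => B (r i)

variable [LinearOrder α] {d : ℕ}

theorem sum_injective_eq_sum_strictAnti_comp_perm {M : Type*} [AddCommMonoid M] (S : Finset α)
    (F : (Fin d → α) → M) :
    ∑ r ∈ Fintype.piFinset (fun _ : Fin d => S) with Function.Injective r, F r =
      ∑ p ∈ Fintype.piFinset (fun _ : Fin d => S) with StrictAnti p,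
        ∑ σ : Equiv.Perm (Fin d), F (p ∘ σ) := by
  rw [← Finset.sum_product']
  refine (Finset.sum_bij (fun q _ => q.1 ∘ q.2) ?_ ?_ ?_ fun _ _ => rfl).symm
  · rintro ⟨p, σ⟩ h
    simp only [Finset.mem_product, Finset.mem_filter, Fintype.mem_piFinset, Finset.mem_univ,
      and_true] at h ⊢
    exact ⟨fun i => h.1 _, h.2.injective.comp σ.injective⟩
  · rintro ⟨p, σ⟩ h ⟨p', σ'⟩ h' heq
    simp only [Finset.mem_product, Finset.mem_filter, Finset.mem_univ, and_true] at h h' heq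
    obtain rfl : p = p' := by
      rw [← StrictAnti.range_inj h.2 h'.2, ← σ.surjective.range_comp p,
        ← σ'.surjective.range_comp p', heq]
    exact Prod.ext rfl (Equiv.ext fun i => h.2.injective (congrFun heq i))
  · intro r hr
    simp only [Finset.mem_filter, Fintype.mem_piFinset] at hr
    let τ := Tuple.sort (OrderDual.toDual ∘ r)
    have hτ : Antitone (r ∘ τ) := Tuple.monotone_sort (OrderDual.toDual ∘ r)
    refine ⟨(r ∘ τ, τ⁻¹), ?_, by ext; simp⟩
    simp only [Finset.mem_product, Finset.mem_filter, Fintype.mem_piFinset, Finset.mem_univ,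
      and_true]
    exact ⟨fun i => hr.1 _, hτ.strictAnti_of_injective (hr.2.comp τ.injective)⟩

theorem cauchy_binet (S : Finset α) (A : Fin d → α → R) (B : α → Fin d → R) :
    Matrix.det (Matrix.of fun i j => ∑ x ∈ S, A i x * B x j) =
      ∑ p ∈ Fintype.piFinset (fun _ : Fin d => S) with StrictAnti p,
        Matrix.det (Matrix.of fun i j => A i (p j)) *
          Matrix.det (Matrix.of fun i j => B (p i) j) := by
  have det_eq_zero : ∀ r : Fin d → α, ¬ Function.Injective r →
      Matrix.det (Matrix.of fun i j => B (r i) j) = 0 := fun r hr => by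
    obtain ⟨i, j, hij, hne⟩ := Function.not_injective_iff.1 hr
    exact Matrix.det_zero_of_row_eq hne (congrArg B hij)
  rw [det_sum_mul_eq_sum_piFinset,
    ← Finset.sum_filter_of_ne (p := Function.Injective) fun r _ hr =>
      not_imp_comm.1 (det_eq_zero r) (right_ne_zero_of_mul hr),
    sum_injective_eq_sum_strictAnti_comp_perm]
  refine Finset.sum_congr rfl fun p _ => ?_
  rw [← Matrix.det_transpose, Matrix.det_apply', Finset.sum_mul]
  refine Finset.sum_congr rfl fun σ _ => ?_
  have permute : Matrix.det (Matrix.of fun i j => B ((p ∘ σ) i) j) =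
      Equiv.Perm.sign σ * Matrix.det (Matrix.of fun i j => B (p i) j) :=
    Matrix.det_permute σ (Matrix.of fun i j => B (p i) j)
  rw [permute]
  simp only [Matrix.transpose_apply, Matrix.of_apply, Function.comp_apply]
  ring

end CauchyBinet

theorem det_of_ite_eq {R α : Type*} [CommRing R] [LinearOrder α] {d : ℕ} {a b : Fin d → α}
    (ha : StrictAnti a) (hb : StrictAnti b) :
    Matrix.det (Matrix.of fun i j => if a i = b j then (1 : R) else 0) =
      if a = b then 1 else 0 := by
  split_ifs with hab
  · subst hab
    have one : (Matrix.of fun i j => if a i = a j then (1 : R) else 0) = 1 := by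
      ext i j
      simp [Matrix.one_apply, ha.injective.eq_iff]
    rw [one, Matrix.det_one]
  · obtain ⟨i, hi⟩ : ∃ i, ∀ j, a i ≠ b j := by
      by_contra! h
      have image_subset : Finset.univ.image a ⊆ Finset.univ.image b := fun x hx => by
        obtain ⟨i, -, rfl⟩ := Finset.mem_image.1 hx
        obtain ⟨j, hj⟩ := h i
        exact Finset.mem_image.2 ⟨j, Finset.mem_univ j, hj.symm⟩
      have image_eq := Finset.eq_of_subset_of_card_le image_subset (by
        rw [Finset.card_image_of_injective _ ha.injective,
          Finset.card_image_of_injective _ hb.injective])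
      refine hab ((StrictAnti.range_inj ha hb).1 ?_)
      simpa using congrArg (fun s : Finset α => (s : Set α)) image_eq
    exact Matrix.det_eq_zero_of_row_eq_zero i fun j => if_neg (hi j)

theorem strictAnti_sub_val_iff {d : ℕ} {ν : Fin d → ℤ} :
    StrictAnti (fun i => ν i - (i : ℕ)) ↔ Antitone ν := by
  cases d with
  | zero => exact iff_of_true (fun i => i.elim0) fun i => i.elim0
  | succ d =>
    rw [Fin.strictAnti_iff_succ_lt, Fin.antitone_iff_succ_le]
    refine forall_congr' fun i => ?_
    simp only [Fin.val_succ, Fin.val_castSucc]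
    omega

section RunWeight

variable {R : Type*} [CommSemiring R]

/-- The weight of a horizontal run of cells with contents in `(a, b]`, where a cell of content `p`
has weight `f p`. These are the entries of the transfer matrix of one letter, so the weight is
zero unless `a ≤ b`. -/
def runWeight (f : ℤ → R) (a b : ℤ) : R :=
  if a ≤ b then ∏ p ∈ Finset.Ioc a b, f p else 0

theorem runWeight_of_le (f : ℤ → R) {a b : ℤ} (hab : a ≤ b) :
    runWeight f a b = ∏ p ∈ Finset.Ioc a b, f p :=
  if_pos hab

theorem runWeight_of_lt (f : ℤ → R) {a b : ℤ} (hba : b < a) : runWeight f a b = 0 :=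
  if_neg hba.not_ge

theorem runWeight_mul_runWeight (f : ℤ → R) {a b c : ℤ} (hab : a ≤ b) (hbc : b ≤ c) :
    runWeight f a b * runWeight f b c = runWeight f a c := by
  rw [runWeight_of_le f hab, runWeight_of_le f hbc, runWeight_of_le f (hab.trans hbc),
    ← Finset.Ioc_union_Ioc_eq_Ioc hab hbc,
    Finset.prod_union (Finset.Ioc_disjoint_Ioc_of_le le_rfl)]

theorem runWeight_sub_sub (f : ℤ → R) (a b t : ℤ) :
    runWeight f (a - t) (b - t) = runWeight (fun c => f (c - t)) a b := by
  simp only [runWeight, sub_le_sub_iff_right]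
  refine if_congr Iff.rfl ?_ rfl
  exact (Finset.prod_equiv (Equiv.subRight t) (by simp) fun c _ => rfl).symm

end RunWeight

section DetRunWeight

variable {R : Type*} [CommRing R] {d : ℕ} {a b : Fin d → ℤ}

theorem det_runWeight_of_forall_lt (f : ℤ → R) (h : ∀ i j, i < j → b j < a i) :
    Matrix.det (Matrix.of fun i j => runWeight f (a i) (b j)) = ∏ i, runWeight f (a i) (b i) :=
  Matrix.det_of_isLowerTriangular _ fun i j hij => runWeight_of_lt f (h i j hij)

/-- Take the least row `i` admitting such a `j`; column `i` is then a multiple of column `j`. -/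
theorem det_runWeight_eq_zero (f : ℤ → R) (ha : Antitone a) (hb : StrictAnti b)
    (h : ∃ i j, i < j ∧ a i ≤ b j) :
    Matrix.det (Matrix.of fun i j => runWeight f (a i) (b j)) = 0 := by
  obtain ⟨i, ⟨j, hij, hle⟩, hmin⟩ := exists_minimal_of_wellFoundedLT _ h
  have hlt : ∀ k < i, b i < a k := fun k hk => by
    by_contra! hc
    exact hk.not_ge (hmin ⟨i, hk, hc⟩ hk.le)
  have hbij : b j < b i := hb hij
  set M := Matrix.of fun i j => runWeight f (a i) (b j) with hM
  have proportional : (fun k => M k i) = runWeight f (b j) (b i) • fun k => M k j := by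
    ext k
    simp only [hM, Matrix.of_apply, Pi.smul_apply, smul_eq_mul]
    rcases lt_or_ge k i with hk | hk
    · rw [runWeight_of_lt f (hlt k hk), runWeight_of_lt f (hbij.trans (hlt k hk)), mul_zero]
    · rw [mul_comm, runWeight_mul_runWeight f ((ha hk).trans hle) hbij.le]
  rw [← Matrix.updateCol_eq_self M i, proportional, Matrix.det_updateCol_smul,
    Matrix.det_zero_of_column_eq hij.ne fun k => by
      rw [Matrix.updateCol_self, Matrix.updateCol_ne hij.ne'], mul_zero]

end DetRunWeight

section Tableaux

variable {d n : ℕ} {lam μ ν : Fin d → ℤ}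

/-- Fillings with letters in `Fin n` of the skew diagram whose row `j` occupies the columns in
`(lam j, μ j]`. -/
abbrev Filling (lam μ : Fin d → ℤ) (n : ℕ) : Type :=
  ∀ j, Finset.Ioc (lam j) (μ j) → Fin n

/-- Semistandard fillings: weakly increasing along rows, strictly increasing down columns. -/
structure IsSemistandard (tab : Filling lam μ n) : Prop where
  rows_monotone : ∀ j, Monotone (tab j)
  cols_lt : ∀ i j, i < j →
    ∀ (c : Finset.Ioc (lam i) (μ i)) (c' : Finset.Ioc (lam j) (μ j)),
      (c : ℤ) = c' → tab i c < tab j c'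

/-- The skew shape `ν / lam` is a horizontal strip: it has at most one cell in each column. -/
structure IsHorizontalStrip (lam ν : Fin d → ℤ) : Prop where
  le : lam ≤ ν
  le_of_lt : ∀ i j, i < j → ν j ≤ lam i

theorem IsHorizontalStrip.antitone (h : IsHorizontalStrip lam ν) : Antitone ν :=
  antitone_iff_forall_lt.2 fun i j hij => (h.le_of_lt i j hij).trans (h.le i)

theorem isHorizontalStrip_iff_forall_sub_lt (hν : Antitone ν) :
    IsHorizontalStrip lam ν ↔
      lam ≤ ν ∧ ∀ i j : Fin d, i < j → ν j - (j : ℕ) < lam i - (i : ℕ) := by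
  refine ⟨fun h => ⟨h.le, fun i j hij => ?_⟩, fun ⟨hle, h⟩ => ⟨hle, fun i j hij => ?_⟩⟩
  · have := h.le_of_lt i j hij
    have : (i : ℕ) < j := hij
    omega
  · let k : Fin d := ⟨i + 1, by omega⟩
    have := h i k (Nat.lt_succ_self i)
    have : ν j ≤ ν k := hν (Nat.succ_le_of_lt hij)
    have : (k : ℕ) = i + 1 := rfl
    omega

/-- Fills the strip between `lam` and `ν` with the letter `0` and raises the letters of `tab`
by one. -/
def zeroExtend (lam : Fin d → ℤ) (tab : Filling ν μ n) : Filling lam μ (n + 1) := fun j c =>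
  if h : ν j < c then
    (tab j ⟨c, Finset.mem_Ioc.2 ⟨h, (Finset.mem_Ioc.1 c.2).2⟩⟩).succ
  else 0

theorem zeroExtend_of_lt (tab : Filling ν μ n) {j : Fin d}
    {c : Finset.Ioc (lam j) (μ j)} (h : ν j < c) :
    zeroExtend lam tab j c =
      (tab j ⟨c, Finset.mem_Ioc.2 ⟨h, (Finset.mem_Ioc.1 c.2).2⟩⟩).succ :=
  dif_pos h

theorem zeroExtend_coe (tab : Filling ν μ n) {j : Fin d} (c : Finset.Ioc (ν j) (μ j))
    (hc : (c : ℤ) ∈ Finset.Ioc (lam j) (μ j)) :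
    zeroExtend lam tab j ⟨c, hc⟩ = (tab j c).succ :=
  zeroExtend_of_lt tab (c := ⟨c, hc⟩) (Finset.mem_Ioc.1 c.2).1

theorem zeroExtend_eq_zero_iff (tab : Filling ν μ n) {j : Fin d}
    {c : Finset.Ioc (lam j) (μ j)} :
    zeroExtend lam tab j c = 0 ↔ (c : ℤ) ≤ ν j := by
  rcases lt_or_ge (ν j) c with h | h
  · simp [zeroExtend_of_lt tab h, h]
  · simp [zeroExtend, h]

theorem isSemistandard_zeroExtend {tab : Filling ν μ n} (hν : IsHorizontalStrip lam ν)
    (htab : IsSemistandard tab) : IsSemistandard (zeroExtend lam tab) := by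
  constructor
  · intro j c c' hc
    rcases lt_or_ge (ν j) c with h | h
    · rw [zeroExtend_of_lt tab h, zeroExtend_of_lt tab (h.trans_le hc), Fin.succ_le_succ_iff]
      exact htab.rows_monotone j hc
    · rw [(zeroExtend_eq_zero_iff tab).2 h]
      exact Fin.zero_le _
  · intro i j hij c c' hc
    have hj : ν j < c' := hc ▸ (hν.le_of_lt i j hij).trans_lt (Finset.mem_Ioc.1 c.2).1
    rcases lt_or_ge (ν i) c with h | h
    · rw [zeroExtend_of_lt tab h, zeroExtend_of_lt tab hj, Fin.succ_lt_succ_iff]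
      exact htab.cols_lt i j hij _ _ hc
    · rw [(zeroExtend_eq_zero_iff tab).2 h, zeroExtend_of_lt tab hj]
      exact Fin.succ_pos _

theorem zeroExtend_injective (hν : lam ≤ ν) :
    Function.Injective (zeroExtend lam : Filling ν μ n → Filling lam μ (n + 1)) := by
  intro tab tab' h
  ext1 j
  ext1 c
  have hc := Finset.Ioc_subset_Ioc_left (hν j) c.2
  rw [← Fin.succ_inj, ← zeroExtend_coe tab c hc, h, zeroExtend_coe]

theorem eq_of_zeroExtend_eq {ν' : Fin d → ℤ} (hν : ν ∈ Finset.Icc lam μ)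
    (hν' : ν' ∈ Finset.Icc lam μ) {tab : Filling ν μ n} {tab' : Filling ν' μ n}
    (h : zeroExtend lam tab = zeroExtend lam tab') : ν = ν' := by
  rw [Finset.mem_Icc] at hν hν'
  ext1 j
  have key : ∀ c ∈ Finset.Ioc (lam j) (μ j), c ≤ ν j ↔ c ≤ ν' j := fun c hc => by
    rw [← zeroExtend_eq_zero_iff tab (c := ⟨c, hc⟩), h, zeroExtend_eq_zero_iff]
  simp only [Finset.mem_Ioc] at key
  have : lam j ≤ ν j ∧ ν j ≤ μ j := ⟨hν.1 j, hν.2 j⟩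
  have : lam j ≤ ν' j ∧ ν' j ≤ μ j := ⟨hν'.1 j, hν'.2 j⟩
  have := key (ν j)
  have := key (ν' j)
  omega

theorem exists_eq_zero_iff_le_of_monotone {a b : ℤ} (hab : a ≤ b)
    {f : Finset.Ioc a b → Fin (n + 1)} (hf : Monotone f) :
    ∃ x ∈ Finset.Icc a b, ∀ c, f c = 0 ↔ (c : ℤ) ≤ x := by
  obtain ⟨x, ⟨hxb, hx⟩, hmax⟩ := Int.exists_greatest_of_bdd
    (P := fun x => x ≤ b ∧ ∀ c : Finset.Ioc a b, (c : ℤ) ≤ x → f c = 0)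
    ⟨b, fun _ h => h.1⟩
    ⟨a, hab, fun c hc => absurd hc (Finset.mem_Ioc.1 c.2).1.not_ge⟩
  refine ⟨x, Finset.mem_Icc.2 ⟨hmax a ⟨hab, fun c hc =>
    absurd hc (Finset.mem_Ioc.1 c.2).1.not_ge⟩, hxb⟩, fun c => ⟨fun hc => ?_, hx c⟩⟩
  exact hmax c ⟨(Finset.mem_Ioc.1 c.2).2, fun c' hc' => Fin.le_zero_iff.1 (hc ▸ hf hc')⟩

theorem exists_zeroExtend_eq_of_eq_zero_iff {tab : Filling lam μ (n + 1)}
    (hν : ν ∈ Finset.Icc lam μ) (hzero : ∀ j c, tab j c = 0 ↔ (c : ℤ) ≤ ν j) :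
    ∃ tab' : Filling ν μ n, zeroExtend lam tab' = tab := by
  have mem : ∀ j, ∀ c : Finset.Ioc (ν j) (μ j), (c : ℤ) ∈ Finset.Ioc (lam j) (μ j) :=
    fun j c => Finset.Ioc_subset_Ioc_left ((Finset.mem_Icc.1 hν).1 j) c.2
  refine ⟨fun j c => (tab j ⟨c, mem j c⟩).pred fun h =>
    ((hzero j _).1 h).not_gt (Finset.mem_Ioc.1 c.2).1, ?_⟩
  ext1 j
  ext1 c
  rcases lt_or_ge (ν j) c with h | h
  · rw [zeroExtend_of_lt _ h, Fin.succ_pred]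
  · rw [(zeroExtend_eq_zero_iff _).2 h, (hzero j c).2 h]

theorem isHorizontalStrip_of_isSemistandard_zeroExtend (hlam : Antitone lam) (hμ : Antitone μ)
    (hν : ν ∈ Finset.Icc lam μ) {tab : Filling ν μ n}
    (htab : IsSemistandard (zeroExtend lam tab)) : IsHorizontalStrip lam ν := by
  rw [Finset.mem_Icc] at hν
  refine ⟨hν.1, fun i j hij => ?_⟩
  by_contra! hlt
  have hi : ν j ∈ Finset.Ioc (lam i) (μ i) :=
    Finset.mem_Ioc.2 ⟨hlt, (hν.2 j).trans (hμ hij.le)⟩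
  have hj : ν j ∈ Finset.Ioc (lam j) (μ j) :=
    Finset.mem_Ioc.2 ⟨(hlam hij.le).trans_lt hlt, hν.2 j⟩
  have := htab.cols_lt i j hij ⟨ν j, hi⟩ ⟨ν j, hj⟩ rfl
  rw [(zeroExtend_eq_zero_iff tab (c := ⟨ν j, hj⟩)).2 le_rfl] at this
  exact Fin.not_lt_zero _ this

theorem isSemistandard_of_isSemistandard_zeroExtend (hν : lam ≤ ν) {tab : Filling ν μ n}
    (htab : IsSemistandard (zeroExtend lam tab)) : IsSemistandard tab := by
  have mem : ∀ j, ∀ c : Finset.Ioc (ν j) (μ j), (c : ℤ) ∈ Finset.Ioc (lam j) (μ j) :=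
    fun j c => Finset.Ioc_subset_Ioc_left (hν j) c.2
  constructor
  · intro j c c' hcc'
    rw [← Fin.succ_le_succ_iff, ← zeroExtend_coe tab c (mem j c),
      ← zeroExtend_coe tab c' (mem j c')]
    exact htab.rows_monotone j hcc'
  · intro i j hij c c' hcc'
    rw [← Fin.succ_lt_succ_iff, ← zeroExtend_coe tab c (mem i c),
      ← zeroExtend_coe tab c' (mem j c')]
    exact htab.cols_lt i j hij _ _ hcc'

theorem IsSemistandard.exists_zeroExtend_eq (hlam : Antitone lam) (hμ : Antitone μ)
    (hle : lam ≤ μ) {tab : Filling lam μ (n + 1)} (htab : IsSemistandard tab) :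
    ∃ ν ∈ Finset.Icc lam μ, IsHorizontalStrip lam ν ∧
      ∃ tab' : Filling ν μ n, IsSemistandard tab' ∧ zeroExtend lam tab' = tab := by
  choose ν hν hzero using fun j =>
    exists_eq_zero_iff_le_of_monotone (hle j) (htab.rows_monotone j)
  have hν : ν ∈ Finset.Icc lam μ :=
    Finset.mem_Icc.2 ⟨fun j => (Finset.mem_Icc.1 (hν j)).1, fun j => (Finset.mem_Icc.1 (hν j)).2⟩
  obtain ⟨tab', rfl⟩ := exists_zeroExtend_eq_of_eq_zero_iff hν hzero
  have hstrip := isHorizontalStrip_of_isSemistandard_zeroExtend hlam hμ hν htab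
  exact ⟨ν, hν, hstrip, tab', isSemistandard_of_isSemistandard_zeroExtend hstrip.le htab, rfl⟩

end Tableaux

section TableauSum

variable {R : Type*} [CommSemiring R] {d n : ℕ} {lam μ ν : Fin d → ℤ}

/-- The generating function of the semistandard fillings of `μ / lam`, where a cell in row `j` and
column `c` holding the letter `i` has weight `w i (c - j)`. It is zero unless `lam ≤ μ`. -/
def tableauSum (w : Fin n → ℤ → R) (lam μ : Fin d → ℤ) : R :=
  if lam ≤ μ then
    ∑ tab : Filling lam μ n with IsSemistandard tab, ∏ j, ∏ c, w (tab j c) (c - (j : ℕ))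
  else 0

/-- The generating function of the weakly increasing fillings of a single row with contents in
`(a, b]`. It is zero unless `a ≤ b`. -/
def rowSum (w : Fin n → ℤ → R) (a b : ℤ) : R :=
  if a ≤ b then
    ∑ f : Finset.Ioc a b → Fin n with Monotone f, ∏ c, w (f c) c
  else 0

theorem tableauSum_of_le (w : Fin n → ℤ → R) (h : lam ≤ μ) :
    tableauSum w lam μ =
      ∑ tab : Filling lam μ n with IsSemistandard tab, ∏ j, ∏ c, w (tab j c) (c - (j : ℕ)) :=
  if_pos h

theorem tableauSum_of_not_le (w : Fin n → ℤ → R) (h : ¬ lam ≤ μ) : tableauSum w lam μ = 0 :=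
  if_neg h

theorem tableauSum_fin_zero (w : Fin 0 → ℤ → R) (lam μ : Fin d → ℤ) :
    tableauSum w lam μ = if lam = μ then 1 else 0 := by
  by_cases hle : lam ≤ μ
  · rw [tableauSum_of_le w hle]
    split_ifs with heq
    · subst heq
      have : ∀ j, IsEmpty (Finset.Ioc (lam j) (lam j)) := fun j =>
        Finset.isEmpty_coe_sort.2 (Finset.Ioc_self _)
      have : ∀ tab : Filling lam lam 0, IsSemistandard tab := fun tab =>
        ⟨fun j c => isEmptyElim c, fun i j _ c => isEmptyElim c⟩
      simp [this]
    · obtain ⟨j, hj⟩ : ∃ j, lam j < μ j := (Pi.lt_def.1 (lt_of_le_of_ne hle heq)).2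
      have : IsEmpty (Filling lam μ 0) :=
        ⟨fun tab => (tab j ⟨μ j, Finset.right_mem_Ioc.2 hj⟩).elim0⟩
      simp
  · rw [tableauSum_of_not_le w hle, if_neg fun h => hle h.le]

theorem tableauSum_fin_one (w : Fin n → ℤ → R) (a b : ℤ) :
    tableauSum w (fun _ : Fin 1 => a) (fun _ => b) = rowSum w a b := by
  unfold tableauSum rowSum
  refine if_congr (by simp [Pi.le_def]) ?_ rfl
  refine Finset.sum_equiv (Equiv.funUnique (Fin 1) _) (fun tab => ?_) fun tab _ => by simp
  simp only [Finset.mem_filter, Finset.mem_univ, true_and, Equiv.funUnique_apply]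
  refine ⟨fun h => h.rows_monotone _, fun h => ⟨fun j => Subsingleton.elim 0 j ▸ h, ?_⟩⟩
  exact fun i j hij => absurd (Subsingleton.elim i j) hij.ne

theorem prod_Ioc_coe_eq_mul {M : Type*} [CommMonoid M] {a x b : ℤ} (hax : a ≤ x) (hxb : x ≤ b)
    (f : Finset.Ioc a b → M) :
    ∏ c, f c =
      (∏ c : Finset.Ioc a x, f ⟨c, Finset.Ioc_subset_Ioc_right hxb c.2⟩) *
        ∏ c : Finset.Ioc x b, f ⟨c, Finset.Ioc_subset_Ioc_left hax c.2⟩ := by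
  obtain ⟨F, hF⟩ : ∃ F : ℤ → M, ∀ c : Finset.Ioc a b, f c = F c :=
    ⟨_, fun c => (Subtype.val_injective.extend_apply f 1 c).symm⟩
  simp only [hF]
  rw [Finset.prod_coe_sort, Finset.prod_coe_sort, Finset.prod_coe_sort,
    ← Finset.Ioc_union_Ioc_eq_Ioc hax hxb,
    Finset.prod_union (Finset.Ioc_disjoint_Ioc_of_le le_rfl)]

theorem prod_zeroExtend (w : Fin (n + 1) → ℤ → R) (hν : ν ∈ Finset.Icc lam μ)
    (tab : Filling ν μ n) :
    ∏ j, ∏ c, w (zeroExtend lam tab j c) (c - (j : ℕ)) =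
      (∏ j : Fin d, runWeight (w 0) (lam j - (j : ℕ)) (ν j - (j : ℕ))) *
        ∏ j, ∏ c, w (tab j c).succ (c - (j : ℕ)) := by
  rw [← Finset.prod_mul_distrib]
  refine Finset.prod_congr rfl fun j _ => ?_
  have hlamν : lam j ≤ ν j := (Finset.mem_Icc.1 hν).1 j
  rw [prod_Ioc_coe_eq_mul hlamν ((Finset.mem_Icc.1 hν).2 j), runWeight_sub_sub,
    runWeight_of_le _ hlamν, ← Finset.prod_coe_sort (Finset.Ioc (lam j) (ν j))]
  refine congrArg₂ (· * ·) (Finset.prod_congr rfl fun c _ => ?_)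
    (Finset.prod_congr rfl fun c _ => ?_)
  · exact congrArg (w · (c - (j : ℕ)))
      ((zeroExtend_eq_zero_iff tab).2 (Finset.mem_Ioc.1 c.2).2)
  · exact congrArg (w · (c - (j : ℕ))) (zeroExtend_coe tab c _)

theorem tableauSum_succ (w : Fin (n + 1) → ℤ → R) (hlam : Antitone lam) (hμ : Antitone μ) :
    tableauSum w lam μ =
      ∑ ν ∈ Finset.Icc lam μ with IsHorizontalStrip lam ν,
        (∏ j : Fin d, runWeight (w 0) (lam j - (j : ℕ)) (ν j - (j : ℕ))) *
          tableauSum (fun i => w i.succ) ν μ := by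
  by_cases hle : lam ≤ μ
  swap
  · rw [tableauSum_of_not_le w hle, Finset.Icc_eq_empty hle, Finset.filter_empty,
      Finset.sum_empty]
  have expand : ∀ ν ∈ (Finset.Icc lam μ).filter (IsHorizontalStrip lam),
      (∏ j : Fin d, runWeight (w 0) (lam j - (j : ℕ)) (ν j - (j : ℕ))) *
          tableauSum (fun i => w i.succ) ν μ =
        ∑ tab : Filling ν μ n with IsSemistandard tab,
          ∏ j, ∏ c, w (zeroExtend lam tab j c) (c - (j : ℕ)) := fun ν hν => by
    have hν := (Finset.mem_filter.1 hν).1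
    rw [tableauSum_of_le _ (Finset.mem_Icc.1 hν).2, Finset.mul_sum]
    exact Finset.sum_congr rfl fun tab _ => (prod_zeroExtend w hν tab).symm
  rw [Finset.sum_congr rfl expand, Finset.sum_sigma', tableauSum_of_le w hle]
  refine (Finset.sum_bij (fun p _ => zeroExtend lam p.2) ?_ ?_ ?_ fun _ _ => rfl).symm
  · rintro ⟨ν, tab⟩ h
    simp only [Finset.mem_sigma, Finset.mem_filter, Finset.mem_univ, true_and] at h ⊢
    exact isSemistandard_zeroExtend h.1.2 h.2
  · rintro ⟨ν, tab⟩ h ⟨ν', tab'⟩ h' heq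
    simp only [Finset.mem_sigma, Finset.mem_filter] at h h'
    obtain rfl := eq_of_zeroExtend_eq h.1.1 h'.1.1 heq
    exact congrArg _ (zeroExtend_injective h.1.2.le heq)
  · intro tab htab
    obtain ⟨ν, hν, hstrip, tab', htab', rfl⟩ :=
      (Finset.mem_filter.1 htab).2.exists_zeroExtend_eq hlam hμ hle
    refine ⟨⟨ν, tab'⟩, ?_, rfl⟩
    simpa only [Finset.mem_sigma, Finset.mem_filter, Finset.mem_univ, true_and] using
      ⟨⟨hν, hstrip⟩, htab'⟩

theorem rowSum_fin_zero (w : Fin 0 → ℤ → R) (a b : ℤ) :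
    rowSum w a b = if a = b then 1 else 0 := by
  rw [← tableauSum_fin_one, tableauSum_fin_zero]
  exact if_congr (by simp [funext_iff]) rfl rfl

theorem rowSum_of_lt (w : Fin n → ℤ → R) {a b : ℤ} (h : b < a) : rowSum w a b = 0 :=
  if_neg h.not_ge

theorem rowSum_succ (w : Fin (n + 1) → ℤ → R) {a b : ℤ} {S : Finset ℤ}
    (hS : Finset.Icc a b ⊆ S) :
    rowSum w a b = ∑ x ∈ S, runWeight (w 0) a x * rowSum (fun i => w i.succ) x b := by
  have outside : ∀ x ∈ S, x ∉ Finset.Icc a b →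
      runWeight (w 0) a x * rowSum (fun i => w i.succ) x b = 0 := fun x _ hx => by
    rcases lt_or_ge x a with h | h
    · rw [runWeight_of_lt _ h, zero_mul]
    · rw [rowSum_of_lt _ (by simpa [h] using hx), mul_zero]
  rw [← Finset.sum_subset hS outside, ← tableauSum_fin_one,
    tableauSum_succ w antitone_const antitone_const]
  refine Finset.sum_equiv (Equiv.funUnique (Fin 1) ℤ) (fun ν => ?_) fun ν _ => ?_
  · simp only [Finset.mem_filter, Finset.mem_Icc, Pi.le_def, Fin.forall_fin_one,
      Equiv.funUnique_apply, Fin.default_eq_zero, and_iff_left_iff_imp]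
    exact fun h => ⟨by simpa [Pi.le_def] using h.1,
      fun i j hij => absurd (Subsingleton.elim i j) hij.ne⟩
  · obtain ⟨x, rfl⟩ : ∃ x, ν = fun _ => x := ⟨ν 0, by ext j; rw [Subsingleton.elim j 0]⟩
    simp [tableauSum_fin_one]

end TableauSum

section DetRowSum

variable {R : Type*} [CommRing R] {d n : ℕ} {lam μ ν : Fin d → ℤ}

theorem det_runWeight_sub (f : ℤ → R) (hlam : Antitone lam) (hν : Antitone ν) :
    Matrix.det (Matrix.of fun i j : Fin d =>
        runWeight f (lam i - (i : ℕ)) (ν j - (j : ℕ))) =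
      if IsHorizontalStrip lam ν then
        ∏ i : Fin d, runWeight f (lam i - (i : ℕ)) (ν i - (i : ℕ))
      else 0 := by
  rw [isHorizontalStrip_iff_forall_sub_lt hν]
  by_cases h : ∀ i j : Fin d, i < j → ν j - (j : ℕ) < lam i - (i : ℕ)
  · rw [det_runWeight_of_forall_lt f h]
    split_ifs with hstrip
    · rfl
    · obtain ⟨i, hi⟩ : ∃ i, ν i < lam i := by
        by_contra! hle
        exact hstrip ⟨hle, h⟩
      exact Finset.prod_eq_zero (Finset.mem_univ i) (runWeight_of_lt f (sub_lt_sub_right hi _))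
  · rw [if_neg fun hstrip => h hstrip.2]
    push Not at h
    exact det_runWeight_eq_zero f (strictAnti_sub_val_iff.2 hlam).antitone
      (strictAnti_sub_val_iff.2 hν) h

theorem exists_finset_forall_Icc_subset (a b : Fin d → ℤ) :
    ∃ S : Finset ℤ, ∀ i j, Finset.Icc (a i) (b j) ⊆ S :=
  ⟨Finset.univ.biUnion fun q : Fin d × Fin d => Finset.Icc (a q.1) (b q.2), fun i j =>
    Finset.subset_biUnion_of_mem (fun q : Fin d × Fin d => Finset.Icc (a q.1) (b q.2))
      (Finset.mem_univ (i, j))⟩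

theorem quantum_jacobi_trudi_general (w : Fin n → ℤ → R) (hlam : Antitone lam) (hμ : Antitone μ) :
    tableauSum w lam μ =
      Matrix.det (Matrix.of fun i j : Fin d =>
        rowSum w (lam i - (i : ℕ)) (μ j - (j : ℕ))) := by
  induction n generalizing lam with
  | zero =>
    simp only [tableauSum_fin_zero, rowSum_fin_zero]
    rw [det_of_ite_eq (strictAnti_sub_val_iff.2 hlam) (strictAnti_sub_val_iff.2 hμ)]
    exact if_congr (by simp [funext_iff]) rfl rfl
  | succ n ih =>
    obtain ⟨S, hS⟩ := exists_finset_forall_Icc_subset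
      (fun i => lam i - (i : ℕ)) (fun j => μ j - (j : ℕ))
    simp only [rowSum_succ w (hS _ _)]
    rw [cauchy_binet, tableauSum_succ w hlam hμ]
    refine Finset.sum_of_injOn (fun ν i => ν i - (i : ℕ)) ?_ ?_ ?_ ?_
    · exact fun ν _ ν' _ h => funext fun i => sub_left_inj.1 (congrFun h i)
    · intro ν hν
      simp only [Finset.coe_filter, Finset.mem_Icc, Set.mem_ofPred_eq, Fintype.mem_piFinset] at hν ⊢
      exact ⟨fun i => hS i i (Finset.mem_Icc.2 ⟨sub_le_sub_right (hν.1.1 i) _,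
        sub_le_sub_right (hν.1.2 i) _⟩), strictAnti_sub_val_iff.2 hν.2.antitone⟩
    · intro p hp hpν
      obtain ⟨ν, rfl⟩ : ∃ ν : Fin d → ℤ, p = fun i => ν i - (i : ℕ) :=
        ⟨fun i => p i + (i : ℕ), by simp⟩
      have hν : Antitone ν := strictAnti_sub_val_iff.1 (Finset.mem_filter.1 hp).2
      rw [det_runWeight_sub _ hlam hν, ← ih _ hν]
      split_ifs with hstrip
      · rw [tableauSum_of_not_le, mul_zero]
        exact fun hle => hpν ⟨ν, by simp [hstrip, hstrip.le, hle], rfl⟩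
      · exact zero_mul _
    · intro ν hν
      have hstrip := (Finset.mem_filter.1 hν).2
      rw [det_runWeight_sub _ hlam hstrip.antitone, if_pos hstrip, ih _ hstrip.antitone]

end DetRowSum

section OneRow

theorem exists_orderIso_fin_Ioc (a b : ℤ) :
    ∃ e : Fin (b - a).toNat ≃o Finset.Ioc a b, ∀ k, (e k : ℤ) = a + 1 + (k : ℕ) := by
  let e : Fin (b - a).toNat → Finset.Ioc a b := fun k =>
    ⟨a + 1 + (k : ℕ), Finset.mem_Ioc.2 (by omega)⟩
  have strictMono : StrictMono e := fun k l (hkl : (k : ℕ) < l) =>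
    Subtype.mk_lt_mk.2 (by omega)
  have surjective : Function.Surjective e := fun ⟨c, hc⟩ => by
    rw [Finset.mem_Ioc] at hc
    exact ⟨⟨(c - (a + 1)).toNat, by omega⟩, Subtype.ext (by simp only [e]; omega)⟩
  exact ⟨strictMono.orderIsoOfSurjective e surjective, fun k => rfl⟩

theorem Hrow_eq_rowSum {R : Type*} [CommRing R] (z : Fin 3 → ℤ → R) {m t s a b : ℤ}
    (hm : m = b - a) (ht : t = s + 2 * a) :
    Hrow z m t = rowSum (fun i p => z i (s + 2 * (p - 1))) a b := by
  subst hm ht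
  obtain ⟨e, he⟩ := exists_orderIso_fin_Ioc a b
  refine if_congr sub_nonneg (Finset.sum_equiv (e.toEquiv.arrowCongr (Equiv.refl _))
    (fun f => ?_) fun f _ => Fintype.prod_equiv e.toEquiv _ _ fun k => ?_) rfl
  · simp only [Finset.mem_filter, Finset.mem_univ, true_and]
    exact ⟨fun h => h.comp e.symm.monotone, fun h => by
      simpa [Function.comp_def] using h.comp e.monotone⟩
  · have content : s + 2 * a + 2 * ((k : ℕ) : ℤ) = s + 2 * ((e k : ℤ) - 1) := by
      rw [he]
      ring
    simp [content]

end OneRow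

/-- The quantum Jacobi–Trudi formula: for a skew Young diagram `μ/λ` with `d` rows,
the sum over semistandard skew tableaux (rows weakly increasing, columns strictly
increasing) of the products of `z`'s with the appropriate integer spectral shifts equals
the determinant `det (H_{μ_j - λ_k - j + k}(s + 2 λ_k - 2(k-1)))`. Rows and columns of
the diagram are indexed here by `j k : Fin d` (so row `j+1`, column entry `c`). -/
theorem quantum_jacobi_trudi {R : Type*} [CommRing R] (z : Fin 3 → ℤ → R)
    (d : ℕ) (hd : 0 < d) (μ lam : Fin d → ℤ)
    (hμanti : Antitone μ) (hlamanti : Antitone lam)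
    (hμ1 : ∀ j, 1 ≤ μ j) (hlam0 : ∀ j, 0 ≤ lam j)
    (hle : ∀ j, lam j ≤ μ j) (s : ℤ) :
    (∑ tab ∈ Finset.univ.filter
        (fun tab : ∀ j : Fin d, {c : ℤ // c ∈ Finset.Ioc (lam j) (μ j)} → Fin 3 =>
          (∀ j : Fin d, ∀ c c' : {c : ℤ // c ∈ Finset.Ioc (lam j) (μ j)},
              (c : ℤ) ≤ (c' : ℤ) → tab j c ≤ tab j c') ∧
          (∀ j j' : Fin d, j < j' →
            ∀ (c : {c : ℤ // c ∈ Finset.Ioc (lam j) (μ j)})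
              (c' : {c : ℤ // c ∈ Finset.Ioc (lam j') (μ j')}),
              (c : ℤ) = (c' : ℤ) → tab j c < tab j' c')),
        ∏ j : Fin d, ∏ c : {c : ℤ // c ∈ Finset.Ioc (lam j) (μ j)},
          z (tab j c) (s + 2 * ((c : ℤ) - 1) - 2 * ((j : ℕ) : ℤ))) =
      Matrix.det (Matrix.of fun j k : Fin d =>
        Hrow z (μ j - lam k - ((j : ℕ) : ℤ) + ((k : ℕ) : ℤ))
          (s + 2 * lam k - 2 * ((k : ℕ) : ℤ))) := by
  let w : Fin 3 → ℤ → R := fun i p => z i (s + 2 * (p - 1))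
  have entry : ∀ j k : Fin d,
      Hrow z (μ j - lam k - (j : ℕ) + (k : ℕ)) (s + 2 * lam k - 2 * (k : ℕ)) =
        rowSum w (lam k - (k : ℕ)) (μ j - (j : ℕ)) := fun j k =>
    Hrow_eq_rowSum z (by ring) (by ring)
  have weight : ∀ (i : Fin 3) (c j : ℤ), z i (s + 2 * (c - 1) - 2 * j) = w i (c - j) :=
    fun i c j => congrArg (z i) (by ring)
  simp only [entry, weight]
  rw [← Matrix.det_transpose]
  refine Eq.trans ?_ (quantum_jacobi_trudi_general w hlamanti hμanti)
  rw [tableauSum_of_le w hle]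
  refine Finset.sum_congr (Finset.filter_congr fun tab _ => ?_) fun _ _ => rfl
  exact ⟨fun h => ⟨h.1, h.2⟩, fun h => ⟨fun j _ _ hc => h.rows_monotone j hc, h.cols_lt⟩⟩

end
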